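/- Let Y be a tiled surface embedded in a boundary reduced tiled surface Z. Then the BR-closure BR(Y↪Z), defined as the intersection of all intermediate boundary reduced tiled surfaces Y ↪ Y' ↪ Z, is boundary reduced and contains Y. Likewise, if Z is strongly boundary reduced, the SBR-closure SBR(Y↪Z), defined as the intersection of all intermediate strongly boundary reduced tiled surfaces Y ↪ Y' ↪ Z, is strongly boundary reduced and contains Y. -/

import Mathlib

/-!
Formalization preamble for "Core Surfaces" (Magee–Puder).

We work with a fixed combinatorial (CW) model.  The surface `Σ_g` has one vertex,
`2g` directed labeled edges (the label `2i` plays the role of `a_{i+1}` and `2i+1`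
the role of `b_{i+1}`), and one `4g`-gon glued along `[a₁,b₁]⋯[a_g,b_g]`.

* `Gamma g` is the surface group, presented by the single relator.
* A `Complex g` is a combinatorial 2-complex with directed, labeled edges and
  2-cells given by their boundary walks; coverings of `Σ_g` are the complexes in
  which every vertex has exactly one incoming/outgoing edge of each label, every
  walk reading the relator is closed, and every closed walk reading the relator
  bounds exactly one face (`IsCovering`).  A tiled surface is a complex that
  embeds into such a covering (`IsTiledSurface`).
* Blocks, chains, boundary cycles (via the ribbon structure coming from the fixed
  cyclic order of the `4g` half-edges around a vertex of `Σ_g`), boundary-reduced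
  and strongly boundary-reduced surfaces are defined combinatorially.
* Homotopy of edge-walks is the edge-path-group homotopy: backtrack insertions and
  insertions of boundaries of (present) faces.
* `cover g J` is the covering space `J\~Σ_g` of `Σ_g` associated to a subgroup
  `J ≤ Γ_g` (vertices = right cosets), and `coreSub g J` is the core surface of
  `J`, defined exactly as in the paper: the union of all shortest representative
  cycles of essential free-homotopy classes, together with all components of the
  complement containing finitely many `4g`-gons.
-/

noncomputable section

namespace CS

/-- Signed letters over the generators `a₁,b₁,…,a_g,b_g` of `Γ_g`
(`a_{i+1} ↦ 2i`, `b_{i+1} ↦ 2i+1`); `true` means a positive letter. -/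
abbrev Letter (g : ℕ) := Fin (2 * g) × Bool

/-- The label of the `p`-th letter of the relator `[a₁,b₁][a₂,b₂]⋯[a_g,b_g]`. -/
def relLabel (g : ℕ) (p : Fin (4 * g)) : Fin (2 * g) :=
  ⟨2 * ((p : ℕ) / 4) + ((p : ℕ) % 4) % 2, by have := p.2; omega⟩

/-- The sign of the `p`-th letter of the relator. -/
def relSign (g : ℕ) (p : Fin (4 * g)) : Bool := decide ((p : ℕ) % 4 < 2)

/-- The relator `[a₁,b₁][a₂,b₂]⋯[a_g,b_g]` as a word (list of signed letters). -/
def relatorWord (g : ℕ) : List (Letter g) :=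
  (List.finRange (4 * g)).map fun p => (relLabel g p, relSign g p)

/-- The relator as an element of the free group on the `2g` generators. -/
def relatorF (g : ℕ) : FreeGroup (Fin (2 * g)) :=
  ((relatorWord g).map fun l => if l.2 then FreeGroup.of l.1 else (FreeGroup.of l.1)⁻¹).prod

/-- The surface group `Γ_g = ⟨a₁,b₁,…,a_g,b_g ∣ [a₁,b₁]⋯[a_g,b_g]⟩`. -/
abbrev Gamma (g : ℕ) := PresentedGroup ({relatorF g} : Set (FreeGroup (Fin (2 * g))))

/-- The image of a signed letter in `Γ_g`. -/
def letterG {g : ℕ} (l : Letter g) : Gamma g :=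
  if l.2 then PresentedGroup.of l.1 else (PresentedGroup.of l.1)⁻¹

/-- The image of a word in `Γ_g`. -/
def wordG {g : ℕ} (w : List (Letter g)) : Gamma g := (w.map letterG).prod

/-- `ℓ(γ^{Γ_g})`: the minimal length of a word in the generators representing the
conjugacy class of `γ` in `Γ_g`. -/
def conjLen {g : ℕ} (γ : Gamma g) : ℕ :=
  sInf {n | ∃ w : List (Letter g), w.length = n ∧ ∃ x : Gamma g, x * wordG w * x⁻¹ = γ}

/-! ### Half-edge positions around a vertex of `Σ_g`

The `4g` half-edges around the vertex `o` of `Σ_g` come in the (clockwise) cyclic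
order `a₁`-out, `b₁`-in, `a₁`-in, `b₁`-out, `a₂`-out, `b₂`-in, `a₂`-in, `b₂`-out, …
-/

/-- Position of the outgoing `ℓ`-labeled half-edge in the cyclic order. -/
def posOut {g : ℕ} (ℓ : Fin (2 * g)) : ℕ :=
  if (ℓ : ℕ) % 2 = 0 then 2 * (ℓ : ℕ) else 2 * (ℓ : ℕ) + 1

/-- Position of the incoming `ℓ`-labeled half-edge in the cyclic order. -/
def posIn {g : ℕ} (ℓ : Fin (2 * g)) : ℕ :=
  if (ℓ : ℕ) % 2 = 0 then 2 * (ℓ : ℕ) + 2 else 2 * (ℓ : ℕ) - 1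

/-- The position of the half-edge through which a traversal of a dart with signed
letter `s` *arrives* at its terminal vertex. -/
def posArr {g : ℕ} (s : Letter g) : ℕ := if s.2 then posIn s.1 else posOut s.1

/-- The position of the half-edge through which a traversal of a dart with signed
letter `s` *leaves* its initial vertex. -/
def posLv {g : ℕ} (s : Letter g) : ℕ := if s.2 then posOut s.1 else posIn s.1

/-- The number of half-edges strictly between the arrival half-edge of `s` and the
departure half-edge of `t`, in the clockwise cyclic order of the `4g` half-edges
around a vertex. -/
def gapN {g : ℕ} (s t : Letter g) : ℕ := (posLv t + 4 * g - (posArr s + 1)) % (4 * g)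

/-! ### Combinatorial complexes -/

/-- A combinatorial at-most-2-dimensional CW-complex with directed edges labeled by
the generators of `Γ_g`, and 2-cells recorded by their boundary walks (lists of
darts, i.e. edges with a direction of traversal). -/
structure Complex (g : ℕ) where
  V : Type
  E : Type
  F : Type
  src : E → V
  dst : E → V
  lab : E → Fin (2 * g)
  bdry : F → List (E × Bool)

namespace Complex

variable {g : ℕ} (Y : Complex g)

/-- Darts: edges together with a direction of traversal (`true` = forward). -/
abbrev D := Y.E × Bool

/-- The initial vertex of a dart. -/
def dTail (d : Y.D) : Y.V := if d.2 then Y.src d.1 else Y.dst d.1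

/-- The terminal vertex of a dart. -/
def dHead (d : Y.D) : Y.V := if d.2 then Y.dst d.1 else Y.src d.1

/-- The reversal of a dart. -/
def dRev (d : Y.D) : Y.D := (d.1, !d.2)

/-- The signed letter read by a dart. -/
def dLet (d : Y.D) : Letter g := (Y.lab d.1, d.2)

/-- The word read along a list of darts. -/
def wordOf (l : List Y.D) : List (Letter g) := l.map Y.dLet

/-- The reversed walk. -/
def revW (l : List Y.D) : List Y.D := (l.map Y.dRev).reverse

/-- `WalkFrom u v l` : `l` is a walk (edge-path) from `u` to `v`. -/
inductive WalkFrom : Y.V → Y.V → List Y.D → Prop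
  | nil (v : Y.V) : WalkFrom v v []
  | cons (d : Y.D) {v : Y.V} {l : List Y.D} :
      WalkFrom (Y.dHead d) v l → WalkFrom (Y.dTail d) v (d :: l)

/-- All darts of `l` use edges from the set `sE`. -/
def InSet (sE : Set Y.E) (l : List Y.D) : Prop := ∀ d ∈ l, d.1 ∈ sE

/-- Two darts are adjacent (can be traversed consecutively). -/
def adj (d d' : Y.D) : Prop := Y.dHead d = Y.dTail d'

/-- A nonempty closed walk. -/
def IsCycle (c : List Y.D) : Prop := c ≠ [] ∧ ∃ v, Y.WalkFrom v v c

/-- **P1**: at most one incoming and at most one outgoing `ℓ`-labeled edge at every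
vertex, for every label `ℓ`. -/
def P1 : Prop :=
  (∀ e e' : Y.E, Y.src e = Y.src e' → Y.lab e = Y.lab e' → e = e') ∧
  (∀ e e' : Y.E, Y.dst e = Y.dst e' → Y.lab e = Y.lab e' → e = e')

/-- **P2**: every walk reading a word equal to `1` in `Γ_g` is closed. -/
def P2 : Prop :=
  ∀ (u v : Y.V) (l : List Y.D), Y.WalkFrom u v l → wordG (Y.wordOf l) = 1 → u = v

/-- **P3**: every 2-cell is glued along a closed walk reading the relator
`[a₁,b₁]⋯[a_g,b_g]`, and every such closed walk bounds at most one 2-cell. -/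
def P3 : Prop :=
  (∀ f : Y.F, (∃ v, Y.WalkFrom v v (Y.bdry f)) ∧ Y.wordOf (Y.bdry f) = relatorWord g) ∧
  Function.Injective Y.bdry

/-- A combinatorial covering space of `Σ_g`: every vertex has exactly one outgoing
and one incoming edge of each label, every walk reading the relator is closed, and
every closed walk reading the relator bounds exactly one `4g`-gon. -/
def IsCovering : Prop :=
  Y.P1 ∧ Y.P3 ∧
  (∀ (v : Y.V) (ℓ : Fin (2 * g)), ∃ e, Y.src e = v ∧ Y.lab e = ℓ) ∧
  (∀ (v : Y.V) (ℓ : Fin (2 * g)), ∃ e, Y.dst e = v ∧ Y.lab e = ℓ) ∧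
  (∀ (u v : Y.V) (l : List Y.D), Y.WalkFrom u v l → Y.wordOf l = relatorWord g → u = v) ∧
  (∀ (v : Y.V) (l : List Y.D), Y.WalkFrom v v l → Y.wordOf l = relatorWord g →
    ∃ f, Y.bdry f = l)

end Complex

/-- A morphism of labeled complexes: maps cells to cells of the same dimension and
respects sources, targets, labels and face boundaries (equivalently, commutes with
the immersions to `Σ_g`). -/
structure Hom {g : ℕ} (Y Z : Complex g) where
  mV : Y.V → Z.V
  mE : Y.E → Z.E
  mF : Y.F → Z.F
  hsrc : ∀ e, Z.src (mE e) = mV (Y.src e)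
  hdst : ∀ e, Z.dst (mE e) = mV (Y.dst e)
  hlab : ∀ e, Z.lab (mE e) = Y.lab e
  hbdry : ∀ f, Z.bdry (mF f) = (Y.bdry f).map fun d => (mE d.1, d.2)

namespace Hom

variable {g : ℕ} {Y Z : Complex g}

/-- The induced map on darts. -/
def mD (φ : Hom Y Z) (d : Y.D) : Z.D := (φ.mE d.1, d.2)

/-- Injectivity (an embedding of complexes). -/
def Inj (φ : Hom Y Z) : Prop :=
  Function.Injective φ.mV ∧ Function.Injective φ.mE ∧ Function.Injective φ.mF

end Hom

namespace Complex

variable {g : ℕ} (Y : Complex g)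

/-- A tiled surface: a complex which embeds into a combinatorial covering space of
`Σ_g` (compatibly with directions and labels). -/
def IsTiledSurface : Prop :=
  ∃ Z : Complex g, Z.IsCovering ∧ ∃ φ : Hom Y Z, φ.Inj

/-- Connectivity of a complex (any two vertices are joined by a walk). -/
def Connected : Prop := Nonempty Y.V ∧ ∀ v w : Y.V, ∃ l, Y.WalkFrom v w l

/-! ### Blocks and chains -/

/-- A block: a nonempty walk such that successive darts have no half-edges between
them (hence it reads a subword of the cyclic relator, of length at most `4g`). -/
def IsBlock (l : List Y.D) : Prop :=
  l ≠ [] ∧ l.length ≤ 4 * g ∧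
  List.Chain' (fun d d' => Y.adj d d' ∧ gapN (Y.dLet d) (Y.dLet d') = 0) l

/-- Two blocks are consecutive: concatenation is a walk and there is exactly one
half-edge between the last dart of the first and the first dart of the second. -/
def chainStep (b b' : List Y.D) : Prop :=
  ∃ d d', b.getLast? = some d ∧ b'.head? = some d' ∧ Y.adj d d' ∧
    gapN (Y.dLet d) (Y.dLet d') = 1

/-- A chain: a nonempty sequence of consecutive blocks. -/
def IsChain (bs : List (List Y.D)) : Prop :=
  bs ≠ [] ∧ (∀ b ∈ bs, Y.IsBlock b) ∧ List.Chain' Y.chainStep bs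

/-- A cyclic chain: a chain whose blocks pave an entire cycle. -/
def IsCyclicChain (bs : List (List Y.D)) : Prop :=
  Y.IsChain bs ∧ ∃ b b', bs.getLast? = some b ∧ bs.head? = some b' ∧ Y.chainStep b b'

/-- A long chain: a chain of consecutive blocks of lengths `2g, 2g−1, …, 2g−1, 2g`. -/
def IsLongChain (bs : List (List Y.D)) : Prop :=
  Y.IsChain bs ∧ ∃ k, bs.map List.length = 2 * g :: (List.replicate k (2 * g - 1) ++ [2 * g])

/-- A half-chain: a cyclic chain all of whose blocks have length `2g − 1`. -/
def IsHalfChain (bs : List (List Y.D)) : Prop :=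
  Y.IsCyclicChain bs ∧ ∀ b ∈ bs, b.length = 2 * g - 1

/-! ### Boundary cycles of the thick version (relative to sets of present edges and
faces), via the ribbon structure -/

/-- `nextD sE d d'`: among darts (with edge in `sE`) leaving the head of `d`, the
dart `d'` is the first one in clockwise order after the arrival half-edge of `d`.
This is the successor map whose orbits trace the boundary components of the thick
version of the ribbon graph. -/
def nextD (sE : Set Y.E) (d d' : Y.D) : Prop :=
  d'.1 ∈ sE ∧ Y.adj d d' ∧
  ∀ d'' : Y.D, d''.1 ∈ sE → Y.adj d d'' →
    gapN (Y.dLet d) (Y.dLet d') ≤ gapN (Y.dLet d) (Y.dLet d'')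

/-- The corner between the consecutive darts `d, d'` is filled by a face from `sF`. -/
def faceStep (sF : Set Y.F) (d d' : Y.D) : Prop :=
  ∃ f ∈ sF, [d, d'] <:+: (Y.bdry f ++ Y.bdry f)

/-- One step along the boundary of the thick version. -/
def bStep (sE : Set Y.E) (sF : Set Y.F) (d d' : Y.D) : Prop :=
  d.1 ∈ sE ∧ Y.nextD sE d d' ∧ ¬ Y.faceStep sF d d'

/-- A (finite segment of a) boundary cycle of the thick version. -/
def BPath (sE : Set Y.E) (sF : Set Y.F) (l : List Y.D) : Prop :=
  l ≠ [] ∧ Y.InSet sE l ∧ List.Chain' (Y.bStep sE sF) l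

/-- A (finite) boundary cycle of the thick version. -/
def BCycle (sE : Set Y.E) (sF : Set Y.F) (l : List Y.D) : Prop :=
  Y.BPath sE sF l ∧ ∃ d d', l.getLast? = some d ∧ l.head? = some d' ∧ Y.bStep sE sF d d'

/-- A dart lying on the boundary of the thick version. -/
def IsBDart (sE : Set Y.E) (sF : Set Y.F) (d : Y.D) : Prop :=
  d.1 ∈ sE ∧ ∃ d', Y.nextD sE d d' ∧ ¬ Y.faceStep sF d d'

/-- Boundary reduced: no boundary cycle contains a long block (length `≥ 2g+1`) or
a long chain. -/
def BoundaryReduced (sE : Set Y.E) (sF : Set Y.F) : Prop :=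
  (∀ l, Y.BPath sE sF l → ¬ (Y.IsBlock l ∧ 2 * g + 1 ≤ l.length)) ∧
  (∀ bs, Y.IsLongChain bs → ¬ Y.BPath sE sF bs.flatten)

/-- Strongly boundary reduced: no boundary cycle contains a half-block (length
exactly `2g`) or a half-chain. -/
def StronglyBoundaryReduced (sE : Set Y.E) (sF : Set Y.F) : Prop :=
  (∀ l, Y.BPath sE sF l → ¬ (Y.IsBlock l ∧ l.length = 2 * g)) ∧
  (∀ bs, Y.IsHalfChain bs → ¬ Y.BCycle sE sF bs.flatten)

/-! ### Combinatorial homotopy of walks -/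

/-- A closed walk traversing the boundary of a face from `sF` (in either direction,
starting anywhere). -/
def faceLoop (sF : Set Y.F) (b : List Y.D) : Prop :=
  ∃ f ∈ sF, ∃ n, b = (Y.bdry f).rotate n ∨ b = Y.revW ((Y.bdry f).rotate n)

/-- Elementary homotopy move: insertion of a backtrack or of a face boundary. -/
def elemMove (sE : Set Y.E) (sF : Set Y.F) (l l' : List Y.D) : Prop :=
  (∃ (l₁ l₂ : List Y.D) (d : Y.D), d.1 ∈ sE ∧ l = l₁ ++ l₂ ∧ l' = l₁ ++ d :: Y.dRev d :: l₂) ∨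
  (∃ l₁ l₂ b, Y.faceLoop sF b ∧ l = l₁ ++ l₂ ∧ l' = l₁ ++ b ++ l₂)

/-- Homotopy (rel endpoints) of walks from `u` to `v`, inside the subcomplex with
edge set `sE` and face set `sF`. -/
def Homotopic (sE : Set Y.E) (sF : Set Y.F) (u v : Y.V) (c c' : List Y.D) : Prop :=
  Relation.EqvGen
    (fun a b =>
      Y.WalkFrom u v a ∧ Y.WalkFrom u v b ∧ Y.InSet sE a ∧ Y.InSet sE b ∧
        (Y.elemMove sE sF a b ∨ Y.elemMove sE sF b a)) c c'

/-- A closed walk which is null-homotopic. -/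
def NullHomotopic (sE : Set Y.E) (sF : Set Y.F) (c : List Y.D) : Prop :=
  ∃ v, Y.WalkFrom v v c ∧ Y.Homotopic sE sF v v c []

/-- An essential cycle: a nonempty closed walk which is not null-homotopic. -/
def Essential (sE : Set Y.E) (sF : Set Y.F) (c : List Y.D) : Prop :=
  Y.IsCycle c ∧ Y.InSet sE c ∧ ¬ Y.NullHomotopic sE sF c

/-- Free homotopy of closed walks. -/
def FreelyHomotopic (sE : Set Y.E) (sF : Set Y.F) (c c' : List Y.D) : Prop :=
  ∃ u v q, Y.WalkFrom u u c ∧ Y.WalkFrom v v c' ∧ Y.WalkFrom u v q ∧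
    Y.InSet sE q ∧ Y.InSet sE c ∧ Y.InSet sE c' ∧
    Y.Homotopic sE sF u u c (q ++ c' ++ Y.revW q)

/-- `c` is a shortest representative of its free homotopy class. -/
def ShortestRep (sE : Set Y.E) (sF : Set Y.F) (c : List Y.D) : Prop :=
  ∀ c', Y.FreelyHomotopic sE sF c c' → c.length ≤ c'.length

end Complex

/-- `s` occurs as a contiguous subword of the cyclic word `c`. -/
def cycContains {α : Type*} (c s : List α) : Prop :=
  s ≠ [] ∧ s.length ≤ c.length ∧ s <:+: (c ++ c)

namespace Complex

variable {g : ℕ} (Y : Complex g)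

/-- The cycle `c` contains no long block and no long chain. -/
def NoLongBlockOrChainCyc (c : List Y.D) : Prop :=
  (∀ s, cycContains c s → ¬ (Y.IsBlock s ∧ 2 * g + 1 ≤ s.length)) ∧
  (∀ bs, Y.IsLongChain bs → ¬ cycContains c bs.flatten)

/-- A (cyclically) non-backtracking cycle. -/
def NonBacktrackingCyc (c : List Y.D) : Prop :=
  ¬ ∃ d : Y.D, cycContains c [d, Y.dRev d]

/-- A cycle which is essential and a shortest representative of its
free homotopy class. -/
def GoodCycle (c : List Y.D) : Prop :=
  Y.IsCycle c ∧ Y.Essential Set.univ Set.univ c ∧ Y.ShortestRep Set.univ Set.univ c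

/-! ### Cells and components of complements -/

/-- The cells of a complex. -/
def Cell := Y.V ⊕ Y.E ⊕ Y.F

def vCell (v : Y.V) : Y.Cell := Sum.inl v
def eCell (e : Y.E) : Y.Cell := Sum.inr (Sum.inl e)
def fCell (f : Y.F) : Y.Cell := Sum.inr (Sum.inr f)

/-- Basic incidence of (open) cells. -/
def inc0 : Y.Cell → Y.Cell → Prop := fun c c' =>
  match c, c' with
  | Sum.inl v, Sum.inr (Sum.inl e) => Y.src e = v ∨ Y.dst e = v
  | Sum.inl v, Sum.inr (Sum.inr f) => ∃ d ∈ Y.bdry f, Y.dTail d = v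
  | Sum.inr (Sum.inl e), Sum.inr (Sum.inr f) => ∃ b, (e, b) ∈ Y.bdry f
  | _, _ => False

/-- Symmetrized incidence of cells. -/
def incid (c c' : Y.Cell) : Prop := Y.inc0 c c' ∨ Y.inc0 c' c

end Complex

/-- A triple of subsets of the cells of a complex `Y` (a prospective subcomplex). -/
structure SubC {g : ℕ} (Y : Complex g) where
  sV : Set Y.V
  sE : Set Y.E
  sF : Set Y.F

namespace SubC

variable {g : ℕ} {Y : Complex g}

/-- `S` is an actual subcomplex: closed under taking boundaries of cells. -/
def IsSub (S : SubC Y) : Prop :=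
  (∀ e ∈ S.sE, Y.src e ∈ S.sV ∧ Y.dst e ∈ S.sV) ∧
  (∀ f ∈ S.sF, ∀ d ∈ Y.bdry f, d.1 ∈ S.sE)

/-- Containment of subcomplexes. -/
def le (S T : SubC Y) : Prop := S.sV ⊆ T.sV ∧ S.sE ⊆ T.sE ∧ S.sF ⊆ T.sF

/-- Compactness: finitely many cells. -/
def Compact (S : SubC Y) : Prop := S.sV.Finite ∧ S.sE.Finite ∧ S.sF.Finite

/-- Connectivity of the subcomplex. -/
def Connected (S : SubC Y) : Prop :=
  S.sV.Nonempty ∧ ∀ v ∈ S.sV, ∀ w ∈ S.sV, ∃ l, Y.WalkFrom v w l ∧ Y.InSet S.sE l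

/-- Image of a subcomplex under a morphism. -/
def image {Z : Complex g} (φ : Hom Y Z) (S : SubC Y) : SubC Z :=
  ⟨φ.mV '' S.sV, φ.mE '' S.sE, φ.mF '' S.sF⟩

end SubC

/-- The whole complex, as a subcomplex of itself. -/
def fullSub {g : ℕ} (Y : Complex g) : SubC Y := ⟨Set.univ, Set.univ, Set.univ⟩

namespace Complex

variable {g : ℕ} (Y : Complex g)

/-- Membership of a cell in a subcomplex. -/
def inSub (S : SubC Y) : Y.Cell → Prop := fun c =>
  match c with
  | Sum.inl v => v ∈ S.sV
  | Sum.inr (Sum.inl e) => e ∈ S.sE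
  | Sum.inr (Sum.inr f) => f ∈ S.sF

/-- Reachability of cells through the open complement of the subcomplex `S`
(= lying in the same connected component of the complement). -/
def reachS (S : SubC Y) (c c' : Y.Cell) : Prop :=
  Relation.ReflTransGen (fun a b => Y.incid a b ∧ ¬ Y.inSub S a ∧ ¬ Y.inSub S b) c c'

end Complex

/-- The closure (as a subcomplex) of the connected component of the cell `c₀` in the
complement of the subcomplex `S`. -/
def compCl {g : ℕ} (Y : Complex g) (S : SubC Y) (c₀ : Y.Cell) : SubC Y :=
  let cF : Set Y.F := {f | Y.reachS S c₀ (Y.fCell f)}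
  let cE : Set Y.E :=
    {e | Y.reachS S c₀ (Y.eCell e)} ∪ {e | ∃ f ∈ cF, ∃ b, (e, b) ∈ Y.bdry f}
  let cV : Set Y.V :=
    {v | Y.reachS S c₀ (Y.vCell v)} ∪ {v | ∃ e ∈ cE, Y.src e = v ∨ Y.dst e = v}
  ⟨cV, cE, cF⟩

/-- The subcomplex has exactly one boundary cycle (which covers all boundary darts). -/
def OneBdry {g : ℕ} (Y : Complex g) (S : SubC Y) : Prop :=
  ∃ δ, Y.BCycle S.sE S.sF δ ∧ ∀ d, Y.IsBDart S.sE S.sF d → d ∈ δ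

/-- The subcomplex has exactly two (disjoint) boundary cycles, covering all
boundary darts. -/
def TwoBdry {g : ℕ} (Y : Complex g) (S : SubC Y) : Prop :=
  ∃ δ₁ δ₂, Y.BCycle S.sE S.sF δ₁ ∧ Y.BCycle S.sE S.sF δ₂ ∧ δ₁.Disjoint δ₂ ∧
    ∀ d, Y.IsBDart S.sE S.sF d → d ∈ δ₁ ∨ d ∈ δ₂

/-- The boundary-reduced closure of `S` inside `Y`: the intersection of all
intermediate boundary reduced subcomplexes. -/
def BRcl {g : ℕ} (Y : Complex g) (S : SubC Y) : SubC Y where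
  sV := ⋂ T ∈ {T : SubC Y | T.IsSub ∧ S.le T ∧ Y.BoundaryReduced T.sE T.sF}, T.sV
  sE := ⋂ T ∈ {T : SubC Y | T.IsSub ∧ S.le T ∧ Y.BoundaryReduced T.sE T.sF}, T.sE
  sF := ⋂ T ∈ {T : SubC Y | T.IsSub ∧ S.le T ∧ Y.BoundaryReduced T.sE T.sF}, T.sF

/-- The strongly-boundary-reduced closure of `S` inside `Y`. -/
def SBRcl {g : ℕ} (Y : Complex g) (S : SubC Y) : SubC Y where
  sV := ⋂ T ∈ {T : SubC Y | T.IsSub ∧ S.le T ∧ Y.StronglyBoundaryReduced T.sE T.sF}, T.sV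
  sE := ⋂ T ∈ {T : SubC Y | T.IsSub ∧ S.le T ∧ Y.StronglyBoundaryReduced T.sE T.sF}, T.sE
  sF := ⋂ T ∈ {T : SubC Y | T.IsSub ∧ S.le T ∧ Y.StronglyBoundaryReduced T.sE T.sF}, T.sF

/-- An isomorphism between the subcomplex `S` of `Y` and the subcomplex `T` of `Z`. -/
structure SubEquiv {g : ℕ} (Y : Complex g) (S : SubC Y) (Z : Complex g) (T : SubC Z) where
  fV : Y.V → Z.V
  fE : Y.E → Z.E
  fF : Y.F → Z.F
  bijV : Set.BijOn fV S.sV T.sV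
  bijE : Set.BijOn fE S.sE T.sE
  bijF : Set.BijOn fF S.sF T.sF
  hsrc : ∀ e ∈ S.sE, Z.src (fE e) = fV (Y.src e)
  hdst : ∀ e ∈ S.sE, Z.dst (fE e) = fV (Y.dst e)
  hlab : ∀ e ∈ S.sE, Z.lab (fE e) = Y.lab e
  hbdry : ∀ f ∈ S.sF, Z.bdry (fF f) = (Y.bdry f).map fun d => (fE d.1, d.2)

/-- `FunnelComponent Y S c₀`: the connected component of the cell `c₀` in the
complement of the subcomplex `S` is a twice-punctured sphere with one funnel and
one fake-puncture.  Rendered combinatorially: the component contains infinitely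
many `4g`-gons (the funnel); there is a boundary cycle `δ` of `S` adjacent to the
component, it is unique (one fake-puncture), and every closed walk inside the
closure of the component is freely homotopic there to a power of `δ` or of its
inverse (so the closure is a half-open annulus bounded by `δ`). -/
def FunnelComponent {g : ℕ} (Y : Complex g) (S : SubC Y) (c₀ : Y.Cell) : Prop :=
  {f : Y.F | Y.reachS S c₀ (Y.fCell f)}.Infinite ∧
  ∃ δ : List Y.D, Y.BCycle S.sE S.sF δ ∧
    (∃ d ∈ δ, ∃ c', Y.incid (Y.eCell d.1) c' ∧ Y.reachS S c₀ c') ∧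
    (∀ δ', Y.BCycle S.sE S.sF δ' →
      (∃ d ∈ δ', ∃ c', Y.incid (Y.eCell d.1) c' ∧ Y.reachS S c₀ c') →
      ∃ n, δ' = δ.rotate n) ∧
    (∀ (v : Y.V) (l : List Y.D), Y.WalkFrom v v l →
      Y.InSet ({e | Y.reachS S c₀ (Y.eCell e)} ∪ {e | ∃ b, (e, b) ∈ δ}) l →
      ∃ n,
        Y.FreelyHomotopic ({e | Y.reachS S c₀ (Y.eCell e)} ∪ {e | ∃ b, (e, b) ∈ δ})
          {f | Y.reachS S c₀ (Y.fCell f)} l ((List.replicate n δ).flatten) ∨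
        Y.FreelyHomotopic ({e | Y.reachS S c₀ (Y.eCell e)} ∪ {e | ∃ b, (e, b) ∈ δ})
          {f | Y.reachS S c₀ (Y.fCell f)} l ((List.replicate n (Y.revW δ)).flatten))

/-- `Y` contains a funnel: an essential cycle `δ` of `Y` cutting off an infinite
region of `Y` which is attached to the rest of `Y` only along `δ`, contains no
boundary of `Y`, and is a half-open annulus (every loop inside is freely homotopic
to a power of `δ`); i.e. an end of `Y` which is a puncture of the ambient covering. -/
def HasFunnel {g : ℕ} (Y : Complex g) : Prop :=
  ∃ (δ : List Y.D) (sE : Set Y.E) (sF : Set Y.F),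
    Y.IsCycle δ ∧ Y.Essential Set.univ Set.univ δ ∧
    (∀ d ∈ δ, d.1 ∉ sE) ∧ sE.Nonempty ∧ sF.Infinite ∧
    (∀ f ∈ sF, ∀ d ∈ Y.bdry f, d.1 ∈ sE ∨ ∃ b, (d.1, b) ∈ δ) ∧
    (∀ f : Y.F, (∃ d ∈ Y.bdry f, d.1 ∈ sE) → f ∈ sF) ∧
    (∀ d : Y.D, d.1 ∈ sE → ¬ Y.IsBDart Set.univ Set.univ d) ∧
    (∀ v : Y.V, (∃ e ∈ sE, Y.src e = v ∨ Y.dst e = v) → (∀ d ∈ δ, Y.dTail d ≠ v) →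
      ∀ e' : Y.E, (Y.src e' = v ∨ Y.dst e' = v) → e' ∈ sE) ∧
    (∀ (v : Y.V) (l : List Y.D), Y.WalkFrom v v l →
      Y.InSet (sE ∪ {e | ∃ b, (e, b) ∈ δ}) l →
      ∃ n,
        Y.FreelyHomotopic (sE ∪ {e | ∃ b, (e, b) ∈ δ}) sF l
          ((List.replicate n δ).flatten) ∨
        Y.FreelyHomotopic (sE ∪ {e | ∃ b, (e, b) ∈ δ}) sF l
          ((List.replicate n (Y.revW δ)).flatten))

/-- The fundamental group of `Y` is cyclic: some closed walk `c` generates all free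
homotopy classes of loops.  (For a connected surface this is *equivalent to NOT
having genus ≥ 1 or at least 3 boundary components/punctures*.) -/
def CyclicPi1 {g : ℕ} (Y : Complex g) : Prop :=
  ∃ c : List Y.D, ∀ (v : Y.V) (l : List Y.D), Y.WalkFrom v v l →
    ∃ n,
      Y.FreelyHomotopic Set.univ Set.univ l ((List.replicate n c).flatten) ∨
      Y.FreelyHomotopic Set.univ Set.univ l ((List.replicate n (Y.revW c)).flatten)

/-! ### The covering space `J\~Σ_g` and the core surface of `J` -/

/-- Right cosets `Jx` of `J` in `Γ_g` — the vertices (and faces) of `J\~Σ_g`. -/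
abbrev Cos (g : ℕ) (J : Subgroup (Gamma g)) := Quotient (QuotientGroup.rightRel J)

/-- The coset `Jx`. -/
def mkCos (g : ℕ) (J : Subgroup (Gamma g)) (x : Gamma g) : Cos g J :=
  Quotient.mk _ x

/-- Right multiplication on right cosets. -/
def rmul (g : ℕ) (J : Subgroup (Gamma g)) (x : Gamma g) : Cos g J → Cos g J :=
  Quotient.map (· * x) (by
    intro a b hab
    have h1 : b * a⁻¹ ∈ J := QuotientGroup.rightRel_apply.mp hab
    refine QuotientGroup.rightRel_apply.mpr ?_
    have h2 : b * x * (a * x)⁻¹ = b * a⁻¹ := by group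
    rw [h2]; exact h1)

/-- The walk in `J\~Σ_g` starting at a vertex and reading a given word. -/
def relWalk (g : ℕ) (J : Subgroup (Gamma g)) :
    Cos g J → List (Letter g) → List ((Cos g J × Fin (2 * g)) × Bool)
  | _, [] => []
  | v, (ℓ, true) :: w =>
      ((v, ℓ), true) :: relWalk g J (rmul g J (PresentedGroup.of ℓ) v) w
  | v, (ℓ, false) :: w =>
      ((rmul g J (PresentedGroup.of ℓ)⁻¹ v, ℓ), false) ::
        relWalk g J (rmul g J (PresentedGroup.of ℓ)⁻¹ v) w

/-- The covering space `Υ = J\~Σ_g` of `Σ_g` corresponding to the subgroup `J`,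
with the CW-structure pulled back from `Σ_g`: vertices and `4g`-gons are the right
cosets of `J`, and each vertex carries one outgoing edge per label. -/
def cover (g : ℕ) (J : Subgroup (Gamma g)) : Complex g where
  V := Cos g J
  E := Cos g J × Fin (2 * g)
  F := Cos g J
  src e := e.1
  dst e := rmul g J (PresentedGroup.of e.2) e.1
  lab e := e.2
  bdry v := relWalk g J v (relatorWord g)

/-- The map `J₁\~Σ_g → J₂\~Σ_g` on vertices, for `J₁ ≤ J₂`. -/
def coverMapV {g : ℕ} {J₁ J₂ : Subgroup (Gamma g)} (h : J₁ ≤ J₂) :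
    Cos g J₁ → Cos g J₂ :=
  Quotient.map id (by
    intro a b hab
    have h1 : b * a⁻¹ ∈ J₁ := QuotientGroup.rightRel_apply.mp hab
    exact QuotientGroup.rightRel_apply.mpr (h h1))

/-- The natural covering morphism on edges. -/
def coverMapE {g : ℕ} {J₁ J₂ : Subgroup (Gamma g)} (h : J₁ ≤ J₂)
    (e : (cover g J₁).E) : (cover g J₂).E :=
  (coverMapV h e.1, e.2)

/-- The natural covering morphism on darts. -/
def coverMapD {g : ℕ} {J₁ J₂ : Subgroup (Gamma g)} (h : J₁ ≤ J₂)
    (d : (cover g J₁).D) : (cover g J₂).D :=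
  (coverMapE h d.1, d.2)

/-- The cycle `c` in `J\~Σ_g` represents the conjugacy class of `γ` in `J`
(conjugacy classes in `J` ↔ free homotopy classes of essential loops in `J\~Σ_g`). -/
def RepCls {g : ℕ} (J : Subgroup (Gamma g)) (c : List ((cover g J).D))
    (γ : Gamma g) : Prop :=
  ∃ x j : Gamma g, j ∈ J ∧
    (cover g J).WalkFrom (mkCos g J x) (mkCos g J x) c ∧
    x * wordG ((cover g J).wordOf c) * x⁻¹ = j * γ * j⁻¹

/-- Step (i) of the definition of the core surface: the edges lying on some
shortest representative cycle of an essential free homotopy class. -/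
def coreE1 (g : ℕ) (J : Subgroup (Gamma g)) : Set (cover g J).E :=
  {e | ∃ c, (cover g J).GoodCycle c ∧ ∃ b, (e, b) ∈ c}

/-- The vertices of step (i) of the definition of the core surface. -/
def coreV1 (g : ℕ) (J : Subgroup (Gamma g)) : Set (cover g J).V :=
  {v | ∃ e ∈ coreE1 g J, (cover g J).src e = v ∨ (cover g J).dst e = v}

/-- Step (i) of the definition of the core surface, as a subcomplex of `J\~Σ_g`. -/
def coreS1 (g : ℕ) (J : Subgroup (Gamma g)) : SubC (cover g J) :=
  ⟨coreV1 g J, coreE1 g J, ∅⟩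

/-- A cell of `J\~Σ_g` lying in a connected component of the complement of step (i)
which contains only finitely many `4g`-gons. -/
def coreFin (g : ℕ) (J : Subgroup (Gamma g)) (c : (cover g J).Cell) : Prop :=
  ¬ (cover g J).inSub (coreS1 g J) c ∧
  {f : (cover g J).F | (cover g J).reachS (coreS1 g J) c ((cover g J).fCell f)}.Finite

open Classical in
/-- The core surface `Core(J)` of a subgroup `J ≤ Γ_g`, as a subcomplex of
`Υ = J\~Σ_g`: (i) the union of all shortest representative cycles of essential
free homotopy classes in `Υ`, together with (ii) all connected components of the
complement containing finitely many `4g`-gons.  For the trivial subgroup it is a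
single vertex. -/
def coreSub (g : ℕ) (J : Subgroup (Gamma g)) : SubC (cover g J) :=
  if J = ⊥ then ⟨{mkCos g J 1}, ∅, ∅⟩
  else
    ⟨coreV1 g J ∪ {v | coreFin g J ((cover g J).vCell v)},
     coreE1 g J ∪ {e | coreFin g J ((cover g J).eCell e)},
     {f | coreFin g J ((cover g J).fCell f)}⟩

/-!
Call two consecutive darts a turn of size `k` if they enclose `k` half-edges. Turns of size `0`
make up blocks and turns of size `1` separate the blocks of a chain. A turn of size `0` is a
boundary step of a subcomplex `T` iff no face of `T` lies to the left of its first dart `d`; a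
turn of size `1` is one iff the dart prolonging a block beyond `d` is missing in `T`. There is at
most one face to the left of `d` and at most one prolonging dart, so either obstruction is present
in an intersection of subcomplexes only if it is present in all of them.

So a boundary block of the intersection is a boundary block of some member. For a long chain (a
half-chain), choose a member `T` in which the turn after the first (last) block is still a
boundary step, and follow the chain from there along the boundary of `T`. Either none of the
blocks of length `2g - 1` can be prolonged in `T`, and the whole chain lies on the boundary of
`T`; or the first prolongable one together with its prolonging dart is a boundary block of length
`2g`, which ends a shorter long chain (is a half-block).
-/

/-! ### Lists -/

section Lists

variable {α : Type*} {a : α} {l : List α} {L : List (List α)}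

theorem exists_eq_cons_cons (h : 2 ≤ l.length) : ∃ a b l', l = a :: b :: l' :=
  match l, h with
  | a :: b :: l', _ => ⟨a, b, l', rfl⟩

theorem exists_pair_infix_append_self_left (h : a ∈ l) : ∃ x, [a, x] <:+: l ++ l := by
  obtain ⟨p, s, rfl⟩ := List.append_of_mem h
  obtain _ | ⟨x, s⟩ := s
  · obtain _ | ⟨x, p⟩ := p
    · exact ⟨a, [], [], rfl⟩
    · exact ⟨x, x :: p, p ++ [a], by simp⟩
  · exact ⟨x, p, s ++ (p ++ a :: x :: s), by simp⟩

theorem exists_pair_infix_append_self_right (h : a ∈ l) : ∃ x, [x, a] <:+: l ++ l := by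
  obtain ⟨x, hx⟩ := exists_pair_infix_append_self_left (List.mem_reverse.2 h)
  refine ⟨x, List.reverse_infix.1 ?_⟩
  simpa using hx

theorem head?_flatten_eq_some (hL : L.head? = some l) (hl : l.head? = some a) :
    L.flatten.head? = some a := by
  obtain ⟨L, rfl⟩ := List.head?_eq_some_iff.1 hL
  rw [List.flatten_cons, List.head?_append, hl, Option.some_or]

theorem getLast?_flatten_eq_some (hL : L.getLast? = some l) (hl : l.getLast? = some a) :
    L.flatten.getLast? = some a := by
  obtain ⟨L, rfl⟩ := List.getLast?_eq_some_iff.1 hL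
  simp only [List.flatten_append, List.flatten_singleton, List.getLast?_append, hl, Option.some_or]

end Lists

/-! ### The cyclic order of half-edges -/

section HalfEdges

variable {g : ℕ}

theorem posLv_lt (s : Letter g) : posLv s < 4 * g := by
  obtain ⟨⟨a, ha⟩, _ | _⟩ := s <;> simp only [posLv, posIn, posOut] <;> grind

theorem posLv_injective : Function.Injective (posLv (g := g)) := by
  rintro ⟨⟨a, ha⟩, _ | _⟩ ⟨⟨a', ha'⟩, _ | _⟩ h <;>
    simp only [posLv, posIn, posOut] at h <;> grind

theorem posLv_reverse (s : Letter g) : posLv (s.1, !s.2) = posArr s := by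
  obtain ⟨a, _ | _⟩ := s <;> rfl

theorem posLv_modEq_iff {s t : Letter g} : posLv s ≡ posLv t [MOD 4 * g] ↔ s = t :=
  ⟨fun h => posLv_injective (h.eq_of_lt_of_lt (posLv_lt s) (posLv_lt t)), fun h => h ▸ rfl⟩

theorem posArr_modEq_iff {s t : Letter g} : posArr s ≡ posArr t [MOD 4 * g] ↔ s = t := by
  rw [← posLv_reverse, ← posLv_reverse, posLv_modEq_iff, Prod.ext_iff, Prod.ext_iff,
    Bool.not_inj_iff]

theorem gapN_lt (s t : Letter g) : gapN s t < 4 * g :=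
  Nat.mod_lt _ (by have := s.1.pos; omega)

theorem gapN_eq_iff {s t : Letter g} {k : ℕ} (hk : k < 4 * g) :
    gapN s t = k ↔ posLv t ≡ k + (posArr s + 1) [MOD 4 * g] := by
  have hs : posArr s < 4 * g := posLv_reverse s ▸ posLv_lt _
  calc gapN s t = k
      ↔ posLv t + 4 * g - (posArr s + 1) ≡ k [MOD 4 * g] := by
        rw [gapN, Nat.ModEq, Nat.mod_eq_of_lt hk]
    _ ↔ posLv t + 4 * g - (posArr s + 1) + (posArr s + 1) ≡ k + (posArr s + 1) [MOD 4 * g] :=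
        ⟨fun h => h.add_right _, Nat.ModEq.add_right_cancel' _⟩
    _ ↔ posLv t ≡ k + (posArr s + 1) [MOD 4 * g] := by
        rw [Nat.sub_add_cancel (by omega), Nat.ModEq, Nat.add_mod_right, Nat.ModEq]

theorem posLv_modEq_gapN (s t : Letter g) :
    posLv t ≡ gapN s t + (posArr s + 1) [MOD 4 * g] :=
  (gapN_eq_iff (gapN_lt s t)).1 rfl

theorem gapN_right_injective (s : Letter g) : Function.Injective (gapN s) := fun t t' h =>
  posLv_modEq_iff.1 <| (posLv_modEq_gapN s t).trans (h ▸ (posLv_modEq_gapN s t').symm)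

theorem gapN_left_injective (t : Letter g) : Function.Injective fun s => gapN s t :=
  fun s s' (h : gapN s t = gapN s' t) => by
    have hpos := (posLv_modEq_gapN s t).symm.trans (posLv_modEq_gapN s' t)
    rw [h] at hpos
    exact posArr_modEq_iff.1 ((hpos.add_left_cancel' _).add_right_cancel' 1)

theorem gapN_reverse_eq_zero {s t u : Letter g} (hst : gapN s t = 1) (hut : gapN u t = 0) :
    gapN s (u.1, !u.2) = 0 := by
  have hs := posLv_modEq_gapN s t
  have hu := posLv_modEq_gapN u t
  rw [hst, add_comm] at hs
  rw [hut, zero_add] at hu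
  rw [gapN_eq_iff (by have := s.1.pos; omega), posLv_reverse, zero_add]
  exact (hu.symm.trans hs).add_right_cancel' 1

end HalfEdges

/-! ### The relator as a cyclic word -/

section Relator

variable {g : ℕ}

/-- The `p`-th letter of the relator. -/
def relLetter (g : ℕ) (p : Fin (4 * g)) : Letter g := (relLabel g p, relSign g p)

theorem relLetter_injective : Function.Injective (relLetter g) := by
  rintro ⟨p, hp⟩ ⟨q, hq⟩ h
  simp only [relLetter, relLabel, relSign, Prod.mk.injEq, Fin.mk.injEq, decide_eq_decide] at h
  rw [Fin.mk.injEq]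
  omega

theorem nodup_relatorWord : (relatorWord g).Nodup :=
  (List.nodup_finRange _).map relLetter_injective

theorem posLv_relLetter (p : Fin (4 * g)) :
    posLv (relLetter g p) = 4 * ((p : ℕ) / 4) + (4 - (p : ℕ) % 4) % 4 := by
  simp only [posLv, posIn, posOut, relLetter, relLabel, relSign]
  grind

theorem posArr_relLetter (p : Fin (4 * g)) :
    posArr (relLetter g p) = 4 * ((p : ℕ) / 4) + (6 - (p : ℕ) % 4) % 4 := by
  simp only [posArr, posIn, posOut, relLetter, relLabel, relSign]
  grind

theorem gapN_relLetter {p q : Fin (4 * g)} (h : (p : ℕ) + 1 ≡ q [MOD 4 * g]) :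
    gapN (relLetter g p) (relLetter g q) = 0 := by
  rw [gapN_eq_iff p.pos, posLv_relLetter, posArr_relLetter]
  obtain hp | hp : (p : ℕ) + 1 < 4 * g ∨ (p : ℕ) + 1 = 4 * g := by omega
  · have hq := h.eq_of_lt_of_lt hp q.2
    exact congrArg (· % (4 * g)) (by omega)
  · have hq : (q : ℕ) = 0 := by
      rw [hp, Nat.ModEq, Nat.mod_self, Nat.mod_eq_of_lt q.2] at h
      exact h.symm
    rw [hq, show 0 + (4 * ((p : ℕ) / 4) + (6 - (p : ℕ) % 4) % 4 + 1) = 4 * g by omega]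
    exact (Nat.modEq_zero_iff_dvd.2 dvd_rfl).symm

theorem isChain_gapN_relatorWord :
    List.IsChain (fun s t => gapN s t = 0) (relatorWord g ++ relatorWord g) := by
  have hword : List.IsChain (fun s t => gapN s t = 0) (relatorWord g) := by
    refine (List.isChain_map _).2 (List.isChain_iff_getElem.2 fun i hi => ?_)
    exact gapN_relLetter (by simp [Nat.ModEq])
  refine List.isChain_append.2 ⟨hword, hword, fun s hs t ht => ?_⟩
  obtain ⟨p, hp, rfl⟩ : ∃ p : Fin (4 * g), (p : ℕ) = 4 * g - 1 ∧ relLetter g p = s := by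
    simpa [relatorWord, List.getLast?_eq_getElem?, List.getElem?_eq_some_iff, Fin.exists_iff,
      relLetter] using hs
  obtain ⟨q, hq, rfl⟩ : ∃ q : Fin (4 * g), (q : ℕ) = 0 ∧ relLetter g q = t := by
    simpa [relatorWord, List.head?_eq_getElem?, List.getElem?_eq_some_iff, Fin.exists_iff,
      relLetter] using ht
  refine gapN_relLetter ?_
  rw [hq, hp, Nat.sub_add_cancel (by have := p.pos; omega)]
  exact Nat.modEq_zero_iff_dvd.2 dvd_rfl

end Relator

/-! ### Darts and walks -/

namespace Complex

variable {g : ℕ} {Y : Complex g}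

theorem dTail_dRev (d : Y.D) : Y.dTail (Y.dRev d) = Y.dHead d := by
  obtain ⟨e, _ | _⟩ := d <;> rfl

theorem dRev_injective : Function.Injective Y.dRev := by
  rintro ⟨e, b⟩ ⟨e', b'⟩ h
  simpa [dRev] using h

theorem walkFrom_nil_iff {u v : Y.V} : Y.WalkFrom u v [] ↔ u = v :=
  ⟨fun h => by cases h; rfl, fun h => h ▸ .nil u⟩

theorem walkFrom_cons_iff {u v : Y.V} {d : Y.D} {l : List Y.D} :
    Y.WalkFrom u v (d :: l) ↔ Y.dTail d = u ∧ Y.WalkFrom (Y.dHead d) v l :=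
  ⟨fun h => by cases h with | cons _ h => exact ⟨rfl, h⟩, fun ⟨hu, h⟩ => hu ▸ h.cons⟩

theorem walkFrom_append_iff {u v : Y.V} {p q : List Y.D} :
    Y.WalkFrom u v (p ++ q) ↔ ∃ w, Y.WalkFrom u w p ∧ Y.WalkFrom w v q := by
  induction p generalizing u with
  | nil => simp only [List.nil_append, walkFrom_nil_iff, exists_eq_left']
  | cons d p ih =>
    simp only [List.cons_append, walkFrom_cons_iff, ih, ← exists_and_left, and_assoc]

theorem WalkFrom.isChain_adj {u v : Y.V} {l : List Y.D} (h : Y.WalkFrom u v l) :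
    List.IsChain Y.adj l := by
  induction h with
  | nil => exact .nil
  | cons d h ih => exact List.isChain_cons.2 ⟨fun d' hd' => by
      obtain ⟨l', rfl⟩ := List.head?_eq_some_iff.1 hd'
      exact (walkFrom_cons_iff.1 h).1.symm, ih⟩

theorem P1.dart_ext (hY : Y.P1) {d d' : Y.D} (htail : Y.dTail d = Y.dTail d')
    (hlet : Y.dLet d = Y.dLet d') : d = d' := by
  obtain ⟨e, b⟩ := d
  obtain ⟨e', b'⟩ := d'
  obtain ⟨hlab, rfl⟩ : Y.lab e = Y.lab e' ∧ b = b' := Prod.ext_iff.1 hlet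
  cases b
  · rw [hY.2 e e' htail hlab]
  · rw [hY.1 e e' htail hlab]

theorem P1.walk_ext (hY : Y.P1) {u v v' : Y.V} {l l' : List Y.D} (h : Y.WalkFrom u v l)
    (h' : Y.WalkFrom u v' l') (hword : Y.wordOf l = Y.wordOf l') : l = l' ∧ v = v' := by
  induction h generalizing l' with
  | nil =>
    obtain rfl : l' = [] := by simpa [wordOf] using hword
    exact ⟨rfl, walkFrom_nil_iff.1 h'⟩
  | cons d _ ih =>
    obtain _ | ⟨d', l'⟩ := l'
    · simp [wordOf] at hword
    obtain ⟨htail, h'⟩ := walkFrom_cons_iff.1 h'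
    obtain ⟨hlet, htl⟩ := List.cons_eq_cons.1 hword
    obtain rfl := hY.dart_ext htail.symm hlet
    obtain ⟨rfl, rfl⟩ := ih h' htl
    exact ⟨rfl, rfl⟩

/-! ### Turns -/

section Turns

/-- The darts `d` and `d'` can be traversed consecutively and enclose exactly `k` half-edges on
the side where boundary cycles look for their next dart: `k = 0` inside a block, `k = 1` between
two blocks of a chain. -/
def turn (Y : Complex g) (k : ℕ) (d d' : Y.D) : Prop :=
  Y.adj d d' ∧ gapN (Y.dLet d) (Y.dLet d') = k

variable {k : ℕ} {d d' x x' y p : Y.D}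

theorem P1.turn_right_unique (hY : Y.P1) (h : Y.turn k d x) (h' : Y.turn k d x') : x = x' :=
  hY.dart_ext (h.1.symm.trans h'.1) (gapN_right_injective _ (h.2.trans h'.2.symm))

theorem P1.turn_left_unique (hY : Y.P1) (h : Y.turn k d x) (h' : Y.turn k d' x) : d = d' := by
  have hlet : Y.dLet d = Y.dLet d' := gapN_left_injective _ (h.2.trans h'.2.symm)
  refine dRev_injective (hY.dart_ext ?_ ?_)
  · rw [dTail_dRev, dTail_dRev]
    exact h.1.trans h'.1.symm
  · exact congrArg (fun s : Letter g => (s.1, !s.2)) hlet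

theorem turn_zero_dRev (hy : Y.turn 1 d y) (hp : Y.turn 0 p y) : Y.turn 0 d (Y.dRev p) :=
  ⟨hy.1.trans (hp.1.symm.trans (dTail_dRev p).symm), gapN_reverse_eq_zero hy.2 hp.2⟩

end Turns

section Faces

variable {f f' : Y.F} {d : Y.D}

theorem P3.isChain_turn_bdry (hY : Y.P3) (f : Y.F) :
    List.IsChain (Y.turn 0) (Y.bdry f ++ Y.bdry f) := by
  obtain ⟨⟨v, hwalk⟩, hword⟩ := hY.1 f
  have hadj : List.IsChain Y.adj (Y.bdry f ++ Y.bdry f) :=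
    (walkFrom_append_iff.2 ⟨v, hwalk, hwalk⟩).isChain_adj
  have hgap : List.IsChain (fun s t => gapN s t = 0) ((Y.bdry f ++ Y.bdry f).map Y.dLet) := by
    rw [List.map_append, show (Y.bdry f).map Y.dLet = relatorWord g from hword]
    exact isChain_gapN_relatorWord
  rw [List.isChain_map] at hgap
  rw [List.isChain_iff_getElem] at hadj hgap ⊢
  exact fun i hi => ⟨hadj i hi, hgap i hi⟩

theorem P3.face_unique (h3 : Y.P3) (h1 : Y.P1) (h : d ∈ Y.bdry f) (h' : d ∈ Y.bdry f') :
    f = f' := by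
  obtain ⟨⟨u, hwalk⟩, hword⟩ := h3.1 f
  obtain ⟨⟨u', hwalk'⟩, hword'⟩ := h3.1 f'
  refine h3.2 ?_
  obtain ⟨p, s, hf⟩ := List.append_of_mem h
  obtain ⟨p', s', hf'⟩ := List.append_of_mem h'
  rw [hf] at hwalk hword ⊢
  rw [hf'] at hwalk' hword' ⊢
  have hnotMem {t u : List (Letter g)} {a : Letter g} (h : t ++ a :: u = relatorWord g) :
      a ∉ t ∧ a ∉ u := by
    rw [← not_or, ← List.mem_append]
    exact (List.nodup_cons.1 (List.nodup_middle.1 (h ▸ nodup_relatorWord))).1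
  simp only [wordOf, List.map_append, List.map_cons] at hword hword'
  obtain ⟨hpp, -, hss⟩ := (List.append_cons_inj_of_notMem (hnotMem hword).1
    (hnotMem hword).2).1 (hword.trans hword'.symm)
  obtain ⟨w, hp, hs⟩ := walkFrom_append_iff.1 hwalk
  obtain ⟨w', hp', hs'⟩ := walkFrom_append_iff.1 hwalk'
  obtain rfl : w = w' := (walkFrom_cons_iff.1 hs).1.symm.trans (walkFrom_cons_iff.1 hs').1
  obtain ⟨hs_eq, rfl⟩ := h1.walk_ext hs hs' (congrArg (Y.dLet d :: ·) hss)
  rw [hs_eq, (h1.walk_ext hp hp' hpp).1]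

end Faces

/-! ### Boundary steps -/

section BoundarySteps

/-- A face of `sF` lies to the left of the dart `d`. -/
def HasLeftTile (Y : Complex g) (sF : Set Y.F) (d : Y.D) : Prop := ∃ f ∈ sF, d ∈ Y.bdry f

/-- A block in `sE` ending with the dart `d` can be prolonged inside `sE`. -/
def IsProlongable (Y : Complex g) (sE : Set Y.E) (d : Y.D) : Prop :=
  ∃ x : Y.D, x.1 ∈ sE ∧ Y.turn 0 d x

variable {sE : Set Y.E} {sF : Set Y.F} {T : SubC Y} {d x y : Y.D}

theorem faceStep_iff_hasLeftTile_left (h1 : Y.P1) (h3 : Y.P3) (hx : Y.turn 0 d x) :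
    Y.faceStep sF d x ↔ Y.HasLeftTile sF d := by
  refine ⟨fun ⟨f, hf, h⟩ => ⟨f, hf, by simpa using h.subset (List.mem_cons_self ..)⟩,
    fun ⟨f, hf, h⟩ => ⟨f, hf, ?_⟩⟩
  obtain ⟨x', hx'⟩ := exists_pair_infix_append_self_left h
  have := List.isChain_pair.1 ((h3.isChain_turn_bdry f).infix hx')
  rwa [h1.turn_right_unique hx this]

theorem faceStep_iff_hasLeftTile_right (h1 : Y.P1) (h3 : Y.P3) (hx : Y.turn 0 d x) :
    Y.faceStep sF d x ↔ Y.HasLeftTile sF x := by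
  refine ⟨fun ⟨f, hf, h⟩ => ⟨f, hf, by simpa using h.subset (show x ∈ [d, x] by simp)⟩,
    fun ⟨f, hf, h⟩ => ⟨f, hf, ?_⟩⟩
  obtain ⟨d', hd'⟩ := exists_pair_infix_append_self_right h
  have := List.isChain_pair.1 ((h3.isChain_turn_bdry f).infix hd')
  rwa [h1.turn_left_unique hx this]

theorem P3.turn_zero_of_faceStep (h3 : Y.P3) (h : Y.faceStep sF d x) : Y.turn 0 d x :=
  let ⟨f, _, hf⟩ := h
  List.isChain_pair.1 ((h3.isChain_turn_bdry f).infix hf)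

theorem bStep_iff_of_turn_zero (h1 : Y.P1) (h3 : Y.P3) (hx : Y.turn 0 d x) :
    Y.bStep sE sF d x ↔ d.1 ∈ sE ∧ x.1 ∈ sE ∧ ¬ Y.HasLeftTile sF d := by
  rw [bStep, faceStep_iff_hasLeftTile_left h1 h3 hx]
  exact and_congr_right fun _ => and_congr_left fun _ =>
    ⟨fun h => h.1, fun h => ⟨h, hx.1, fun _ _ _ => hx.2.trans_le (Nat.zero_le _)⟩⟩

theorem bStep_iff_of_turn_one (h3 : Y.P3) (hy : Y.turn 1 d y) :
    Y.bStep sE sF d y ↔ d.1 ∈ sE ∧ y.1 ∈ sE ∧ ¬ Y.IsProlongable sE d := by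
  have hface : ¬ Y.faceStep sF d y := fun h =>
    absurd ((h3.turn_zero_of_faceStep h).2.symm.trans hy.2) zero_ne_one
  refine and_congr_right fun _ => ⟨fun ⟨⟨hyE, _, hmin⟩, _⟩ => ⟨hyE, fun ⟨x, hxE, hx⟩ => ?_⟩,
    fun ⟨hyE, hpro⟩ => ⟨⟨hyE, hy.1, fun x hxE hx => ?_⟩, hface⟩⟩
  · have := hmin x hxE hx.1
    rw [hy.2, hx.2] at this
    omega
  · rw [hy.2]
    exact Nat.one_le_iff_ne_zero.2 fun h0 => hpro ⟨x, hxE, hx, h0⟩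

theorem not_hasLeftTile_of_not_isProlongable (h3 : Y.P3) (hT : T.IsSub)
    (hd : ¬ Y.IsProlongable T.sE d) : ¬ Y.HasLeftTile T.sF d := fun ⟨f, hf, hdf⟩ => by
  obtain ⟨x, hx⟩ := exists_pair_infix_append_self_left hdf
  have hxf : x ∈ Y.bdry f := by simpa using hx.subset (show x ∈ [d, x] by simp)
  exact hd ⟨x, hT.2 f hf x hxf, List.isChain_pair.1 ((h3.isChain_turn_bdry f).infix hx)⟩

/-- A face to the left of `y` contains the dart `p` preceding `y` in its boundary, and the
reversal of `p` prolongs `d`. -/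
theorem not_hasLeftTile_of_turn_one (h3 : Y.P3) (hT : T.IsSub) (hy : Y.turn 1 d y)
    (hd : ¬ Y.IsProlongable T.sE d) : ¬ Y.HasLeftTile T.sF y := fun ⟨f, hf, hyf⟩ => by
  obtain ⟨p, hp⟩ := exists_pair_infix_append_self_right hyf
  have hpf : p ∈ Y.bdry f := by simpa using hp.subset (List.mem_cons_self ..)
  have hturn := List.isChain_pair.1 ((h3.isChain_turn_bdry f).infix hp)
  exact hd ⟨Y.dRev p, hT.2 f hf p hpf, turn_zero_dRev hy hturn⟩

end BoundarySteps

section BoundaryBlocks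

variable {sE : Set Y.E} {sF : Set Y.F} {l : List Y.D} {d : Y.D}

theorem hasLeftTile_iff_of_isChain (h1 : Y.P1) (h3 : Y.P3) (hl : List.IsChain (Y.turn 0) (d :: l))
    {x : Y.D} (hx : x ∈ l) : Y.HasLeftTile sF x ↔ Y.HasLeftTile sF d := by
  induction l generalizing d with
  | nil => simp at hx
  | cons y l ih =>
    obtain ⟨hdy, hl⟩ := List.isChain_cons_cons.1 hl
    have hyd : Y.HasLeftTile sF y ↔ Y.HasLeftTile sF d :=
      (faceStep_iff_hasLeftTile_right h1 h3 hdy).symm.trans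
        (faceStep_iff_hasLeftTile_left h1 h3 hdy)
    obtain rfl | hx := List.mem_cons.1 hx
    · exact hyd
    · exact (ih hl hx).trans hyd

theorem isChain_bStep_of_isChain_turn (h1 : Y.P1) (h3 : Y.P3) (hl : List.IsChain (Y.turn 0) l)
    (hE : Y.InSet sE l) (hd : d ∈ l) (htile : ¬ Y.HasLeftTile sF d) :
    List.IsChain (Y.bStep sE sF) l := by
  obtain _ | ⟨a, l⟩ := l
  · exact .nil
  have ha : ¬ Y.HasLeftTile sF a := by
    obtain rfl | hd := List.mem_cons.1 hd
    · exact htile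
    · rwa [← hasLeftTile_iff_of_isChain h1 h3 hl hd]
  have hall : ∀ x ∈ a :: l, ¬ Y.HasLeftTile sF x := List.forall_mem_cons.2
    ⟨ha, fun x hx => by rwa [hasLeftTile_iff_of_isChain h1 h3 hl hx]⟩
  exact hl.imp_of_mem_imp fun x y hx hy hxy =>
    (bStep_iff_of_turn_zero h1 h3 hxy).2 ⟨hE x hx, hE y hy, hall x hx⟩

end BoundaryBlocks

/-! ### Chains of tight blocks -/

section TightBlocks

/-- No block ending like `b` can be prolonged inside `sE`. -/
def IsTight (Y : Complex g) (sE : Set Y.E) (b : List Y.D) : Prop :=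
  ∀ d ∈ b.getLast?, ¬ Y.IsProlongable sE d

/-- Consecutive blocks, the first of which cannot be prolonged inside `sE`: for blocks in `sE` this
says that the passage from `b` to `b'` follows the boundary. -/
def tightStep (Y : Complex g) (sE : Set Y.E) (b b' : List Y.D) : Prop :=
  Y.chainStep b b' ∧ Y.IsTight sE b

variable {sE : Set Y.E} {T : SubC Y} {b b' p : List Y.D} {bs : List (List Y.D)}

theorem genus_pos (d : Y.D) : 0 < g := by
  have := (Y.lab d.1).pos
  omega

theorem IsBlock.genus_pos (h : Y.IsBlock b) : 0 < g :=
  let ⟨d, _⟩ := List.exists_mem_of_ne_nil b h.1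
  Complex.genus_pos d

theorem IsBlock.isChain_turn (h : Y.IsBlock b) : List.IsChain (Y.turn 0) b := h.2.2

theorem IsBlock.exists_append_of_not_isTight (h : Y.IsBlock b) (hE : Y.InSet sE b)
    (hlen : b.length < 4 * g) (hb : ¬ Y.IsTight sE b) :
    ∃ x, Y.IsBlock (b ++ [x]) ∧ Y.InSet sE (b ++ [x]) := by
  simp only [IsTight, not_forall, not_not] at hb
  obtain ⟨d, hd, x, hxE, hx⟩ := hb
  refine ⟨x, ⟨by simp, by simpa using hlen, ?_⟩,
    List.forall_mem_append.2 ⟨hE, by simpa using hxE⟩⟩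
  refine List.isChain_append.2 ⟨h.isChain_turn, .singleton x, fun d' hd' x' hx' => ?_⟩
  obtain rfl : d = d' := Option.mem_unique hd hd'
  obtain rfl : x = x' := by simpa using hx'
  exact hx

theorem IsTight.isChain_bStep (hp : Y.IsTight T.sE p) (h1 : Y.P1) (h3 : Y.P3) (hT : T.IsSub)
    (hblock : Y.IsBlock p) (hE : Y.InSet T.sE p) : List.IsChain (Y.bStep T.sE T.sF) p :=
  isChain_bStep_of_isChain_turn h1 h3 hblock.isChain_turn hE (List.getLast_mem hblock.1)
    (not_hasLeftTile_of_not_isProlongable h3 hT (hp _ (List.getLast_mem_getLast? hblock.1)))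

theorem tightStep.isChain_bStep (h : Y.tightStep T.sE b b') (h1 : Y.P1) (h3 : Y.P3) (hT : T.IsSub)
    (hblock : Y.IsBlock b') (hE : Y.InSet T.sE b') : List.IsChain (Y.bStep T.sE T.sF) b' := by
  obtain ⟨⟨d, y, hd, hy, hturn⟩, htight⟩ := h
  exact isChain_bStep_of_isChain_turn h1 h3 hblock.isChain_turn hE (List.mem_of_mem_head? hy)
    (not_hasLeftTile_of_turn_one h3 hT hturn (htight d hd))

theorem isChain_bStep_flatten_of_tightStep (h1 : Y.P1) (h3 : Y.P3) (hT : T.IsSub)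
    (hblock : ∀ b ∈ p :: bs, Y.IsBlock b ∧ Y.InSet T.sE b)
    (hstep : List.IsChain (Y.tightStep T.sE) (p :: bs))
    (hp : List.IsChain (Y.bStep T.sE T.sF) p) :
    List.IsChain (Y.bStep T.sE T.sF) (p :: bs).flatten := by
  refine (List.isChain_flatten fun h => (hblock [] h).1.1 rfl).2 ⟨?_, ?_⟩
  · induction bs generalizing p with
    | nil => simpa using hp
    | cons b bs ih =>
      obtain ⟨hpb, hstep⟩ := List.isChain_cons_cons.1 hstep
      obtain ⟨hbb, hbE⟩ := hblock b (by simp)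
      exact List.forall_mem_cons.2 ⟨hp, ih (fun c hc => hblock c (List.mem_cons_of_mem _ hc)) hstep
        (hpb.isChain_bStep h1 h3 hT hbb hbE)⟩
  · refine hstep.imp_of_mem_imp fun b b' hb hb' ⟨⟨d, y, hd, hy, hturn⟩, htight⟩ d' hd' y' hy' => ?_
    obtain rfl : d = d' := Option.mem_unique hd hd'
    obtain rfl : y = y' := Option.mem_unique hy hy'
    exact (bStep_iff_of_turn_one h3 hturn).2 ⟨(hblock b hb).2 d (List.mem_of_getLast? hd),
      (hblock b' hb').2 y (List.mem_of_mem_head? hy), htight d hd⟩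

theorem chainStep_append_right (h : Y.chainStep p b) (l : List Y.D) : Y.chainStep p (b ++ l) :=
  let ⟨d, y, hd, hy, hturn⟩ := h
  ⟨d, y, hd, by rw [List.head?_append, hy, Option.some_or], hturn⟩

end TightBlocks

section LongChains

variable {sE : Set Y.E} {T : SubC Y} {p : List Y.D} {bs : List (List Y.D)}

/-- Follow the blocks of length `2g - 1` until one of them is not tight; prolonging that one by a
dart gives the final block of length `2g`. -/
theorem exists_isChain_tightStep {k : ℕ} (hp : Y.IsTight sE p)
    (hblock : ∀ b ∈ bs, Y.IsBlock b ∧ Y.InSet sE b) (hstep : List.IsChain Y.chainStep (p :: bs))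
    (hlen : bs.map List.length = List.replicate k (2 * g - 1) ++ [2 * g]) :
    ∃ cs : List (List Y.D), (∀ b ∈ cs, Y.IsBlock b ∧ Y.InSet sE b) ∧
      List.IsChain (Y.tightStep sE) (p :: cs) ∧
      ∃ m, cs.map List.length = List.replicate m (2 * g - 1) ++ [2 * g] := by
  induction k generalizing p bs with
  | zero =>
    obtain ⟨q, rfl⟩ := List.length_eq_one_iff.1
      (by simpa using congrArg List.length hlen : bs.length = 1)
    exact ⟨[q], hblock, List.isChain_pair.2 ⟨List.isChain_pair.1 hstep, hp⟩, 0, hlen⟩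
  | succ k ih =>
    rw [List.replicate_succ, List.cons_append, List.map_eq_cons_iff] at hlen
    obtain ⟨q, bs, rfl, hq, hlen⟩ := hlen
    obtain ⟨hpq, hstep⟩ := List.isChain_cons_cons.1 hstep
    obtain ⟨⟨hqb, hqE⟩, hblock⟩ := List.forall_mem_cons.1 hblock
    by_cases hqt : Y.IsTight sE q
    · obtain ⟨cs, hcs, hcstep, m, hclen⟩ := ih hqt hblock hstep hlen
      exact ⟨q :: cs, List.forall_mem_cons.2 ⟨⟨hqb, hqE⟩, hcs⟩,
        List.isChain_cons_cons.2 ⟨⟨hpq, hp⟩, hcstep⟩, m + 1, by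
          rw [List.map_cons, hq, hclen, List.replicate_succ, List.cons_append]⟩
    · have hg := hqb.genus_pos
      obtain ⟨x, hxb, hxE⟩ := hqb.exists_append_of_not_isTight hqE (by omega) hqt
      refine ⟨[q ++ [x]], by simpa using ⟨hxb, hxE⟩,
        List.isChain_pair.2 ⟨chainStep_append_right hpq [x], hp⟩, 0, ?_⟩
      simp only [List.map_cons, List.map_nil, List.length_append, List.length_singleton, hq,
        List.replicate_zero, List.nil_append, List.cons.injEq, and_true]
      omega

theorem BoundaryReduced.not_isTight (hBR : Y.BoundaryReduced T.sE T.sF) (h1 : Y.P1) (h3 : Y.P3)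
    (hT : T.IsSub) (hbs : Y.IsLongChain (p :: bs)) (hE : ∀ b ∈ p :: bs, Y.InSet T.sE b) :
    ¬ Y.IsTight T.sE p := fun hp => by
  obtain ⟨⟨-, hblock, hstep⟩, k, hlen⟩ := hbs
  obtain ⟨hplen, hlen⟩ := List.cons_eq_cons.1 hlen
  obtain ⟨cs, hcs, hcstep, m, hclen⟩ := exists_isChain_tightStep hp (fun b hb =>
    ⟨hblock b (List.mem_cons_of_mem p hb), hE b (List.mem_cons_of_mem p hb)⟩) hstep hlen
  have hpcs : ∀ b ∈ p :: cs, Y.IsBlock b ∧ Y.InSet T.sE b :=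
    List.forall_mem_cons.2 ⟨⟨hblock p (by simp), hE p (by simp)⟩, hcs⟩
  obtain ⟨⟨hpb, hpE⟩, -⟩ := List.forall_mem_cons.1 hpcs
  refine hBR.2 (p :: cs) ⟨⟨List.cons_ne_nil p cs, fun b hb => (hpcs b hb).1,
    hcstep.imp fun _ _ h => h.1⟩, m, by rw [List.map_cons, hplen, hclen]⟩ ⟨?_, ?_, ?_⟩
  · simp [hpb.1]
  · exact List.forall_mem_flatten.2 fun b hb => (hpcs b hb).2
  · exact isChain_bStep_flatten_of_tightStep h1 h3 hT hpcs hcstep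
      (hp.isChain_bStep h1 h3 hT hpb hpE)

end LongChains

section HalfChains

variable {T : SubC Y} {p b : List Y.D} {bs : List (List Y.D)}

/-- Otherwise the prolongation of `b` is a half-block on the boundary. -/
theorem StronglyBoundaryReduced.isTight (hBR : Y.StronglyBoundaryReduced T.sE T.sF) (h1 : Y.P1)
    (h3 : Y.P3) (hT : T.IsSub) (hp : Y.IsTight T.sE p) (hpb : Y.chainStep p b) (hb : Y.IsBlock b)
    (hE : Y.InSet T.sE b) (hlen : b.length = 2 * g - 1) : Y.IsTight T.sE b := by
  by_contra hbt
  have hg := hb.genus_pos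
  obtain ⟨x, hxb, hxE⟩ := hb.exists_append_of_not_isTight hE (by omega) hbt
  have htight : Y.tightStep T.sE p (b ++ [x]) := ⟨chainStep_append_right hpb [x], hp⟩
  refine hBR.1 (b ++ [x]) ⟨hxb.1, hxE, htight.isChain_bStep h1 h3 hT hxb hxE⟩ ⟨hxb, ?_⟩
  rw [List.length_append, hlen, List.length_singleton]
  omega

theorem StronglyBoundaryReduced.isChain_tightStep (hBR : Y.StronglyBoundaryReduced T.sE T.sF)
    (h1 : Y.P1) (h3 : Y.P3) (hT : T.IsSub) (hp : Y.IsTight T.sE p)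
    (hblock : ∀ b ∈ bs, Y.IsBlock b ∧ Y.InSet T.sE b) (hlen : ∀ b ∈ bs, b.length = 2 * g - 1)
    (hstep : List.IsChain Y.chainStep (p :: bs)) : List.IsChain (Y.tightStep T.sE) (p :: bs) := by
  induction bs generalizing p with
  | nil => exact .singleton p
  | cons b bs ih =>
    obtain ⟨hpb, hstep⟩ := List.isChain_cons_cons.1 hstep
    obtain ⟨⟨hb, hbE⟩, hblock⟩ := List.forall_mem_cons.1 hblock
    obtain ⟨hblen, hlen⟩ := List.forall_mem_cons.1 hlen
    have hbt := hBR.isTight h1 h3 hT hp hpb hb hbE hblen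
    exact List.isChain_cons_cons.2 ⟨⟨hpb, hp⟩, ih hbt hblock hlen hstep⟩

theorem StronglyBoundaryReduced.not_isTight (hBR : Y.StronglyBoundaryReduced T.sE T.sF)
    (h1 : Y.P1) (h3 : Y.P3) (hT : T.IsSub) (hbs : Y.IsHalfChain bs)
    (hE : ∀ b ∈ bs, Y.InSet T.sE b) (hlast : bs.getLast? = some p) :
    ¬ Y.IsTight T.sE p := fun hp => by
  obtain ⟨⟨⟨-, hblock, hstep⟩, q, b, hq, hb, hqb⟩, hlen⟩ := id hbs
  obtain rfl : q = p := Option.some_injective _ (hq.symm.trans hlast)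
  have hqbs : q ∈ bs := List.mem_of_getLast? hq
  have hcyc : List.IsChain Y.chainStep (q :: bs) := List.isChain_cons.2
    ⟨fun b' hb' => Option.mem_unique hb hb' ▸ hqb, hstep⟩
  have hblockE : ∀ b ∈ bs, Y.IsBlock b ∧ Y.InSet T.sE b := fun b hb => ⟨hblock b hb, hE b hb⟩
  have htight := hBR.isChain_tightStep h1 h3 hT hp hblockE hlen hcyc
  have hbdry : List.IsChain (Y.bStep T.sE T.sF) (q ++ bs.flatten) :=
    isChain_bStep_flatten_of_tightStep h1 h3 hT
      (List.forall_mem_cons.2 ⟨hblockE q hqbs, hblockE⟩) htight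
      (hp.isChain_bStep h1 h3 hT (hblock q hqbs) (hE q hqbs))
  obtain ⟨-, hpath, hclose⟩ := List.isChain_append.1 hbdry
  obtain ⟨d, y, hd, hy, -⟩ := hqb
  have hd' := getLast?_flatten_eq_some hq hd
  have hy' := head?_flatten_eq_some hb hy
  exact hBR.2 bs hbs ⟨⟨fun h => by simp [h] at hd', List.forall_mem_flatten.2 hE, hpath⟩,
    d, y, hd', hy', hclose d hd y hy'⟩

end HalfChains

end Complex

/-! ### Intersections of subcomplexes -/

/-- The intersection of a family of subcomplexes, such as the families of intermediate (strongly)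
boundary reduced subcomplexes defining the closures `BRcl` and `SBRcl`. -/
def SubC.sInter {g : ℕ} {Y : Complex g} (𝓕 : Set (SubC Y)) : SubC Y where
  sV := ⋂ T ∈ 𝓕, T.sV
  sE := ⋂ T ∈ 𝓕, T.sE
  sF := ⋂ T ∈ 𝓕, T.sF

namespace SubC

variable {g : ℕ} {Y : Complex g} {𝓕 : Set (SubC Y)} {S T : SubC Y} {d : Y.D}

theorem mem_sE_sInter {e : Y.E} : e ∈ (sInter 𝓕).sE ↔ ∀ T ∈ 𝓕, e ∈ T.sE := Set.mem_iInter₂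

theorem mem_sF_sInter {f : Y.F} : f ∈ (sInter 𝓕).sF ↔ ∀ T ∈ 𝓕, f ∈ T.sF := Set.mem_iInter₂

theorem sE_sInter_subset (hT : T ∈ 𝓕) : (sInter 𝓕).sE ⊆ T.sE := Set.biInter_subset_of_mem hT

theorem le_sInter (h : ∀ T ∈ 𝓕, S.le T) : S.le (sInter 𝓕) :=
  ⟨Set.subset_iInter₂ fun T hT => (h T hT).1, Set.subset_iInter₂ fun T hT => (h T hT).2.1,
    Set.subset_iInter₂ fun T hT => (h T hT).2.2⟩

theorem isSub_fullSub (Y : Complex g) : (fullSub Y).IsSub :=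
  ⟨fun _ _ => ⟨trivial, trivial⟩, fun _ _ _ _ => trivial⟩

theorem le_fullSub (S : SubC Y) : S.le (fullSub Y) :=
  ⟨Set.subset_univ _, Set.subset_univ _, Set.subset_univ _⟩

theorem isProlongable_sInter_iff (h1 : Y.P1) (hne : 𝓕.Nonempty) :
    Y.IsProlongable (sInter 𝓕).sE d ↔ ∀ T ∈ 𝓕, Y.IsProlongable T.sE d := by
  refine ⟨fun ⟨x, hxE, hx⟩ T hT => ⟨x, sE_sInter_subset hT hxE, hx⟩, fun h => ?_⟩
  obtain ⟨T₀, hT₀⟩ := hne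
  obtain ⟨x, -, hx⟩ := h T₀ hT₀
  refine ⟨x, mem_sE_sInter.2 fun T hT => ?_, hx⟩
  obtain ⟨x', hxE', hx'⟩ := h T hT
  rwa [h1.turn_right_unique hx hx']

theorem hasLeftTile_sInter_iff (h1 : Y.P1) (h3 : Y.P3) (hne : 𝓕.Nonempty) :
    Y.HasLeftTile (sInter 𝓕).sF d ↔ ∀ T ∈ 𝓕, Y.HasLeftTile T.sF d := by
  refine ⟨fun ⟨f, hf, hd⟩ T hT => ⟨f, mem_sF_sInter.1 hf T hT, hd⟩, fun h => ?_⟩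
  obtain ⟨T₀, hT₀⟩ := hne
  obtain ⟨f, -, hd⟩ := h T₀ hT₀
  refine ⟨f, mem_sF_sInter.2 fun T hT => ?_, hd⟩
  obtain ⟨f', hf', hd'⟩ := h T hT
  rwa [h3.face_unique h1 hd hd']

theorem exists_bPath_of_bPath_sInter (h1 : Y.P1) (h3 : Y.P3) (hne : 𝓕.Nonempty) {l : List Y.D}
    (hpath : Y.BPath (sInter 𝓕).sE (sInter 𝓕).sF l) (hl : Y.IsBlock l) (hlen : 2 ≤ l.length) :
    ∃ T ∈ 𝓕, Y.BPath T.sE T.sF l := by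
  obtain ⟨hnil, hE, hstep⟩ := hpath
  obtain ⟨d, x, l, rfl⟩ := exists_eq_cons_cons hlen
  have hdx : Y.turn 0 d x := (List.isChain_cons_cons.1 hl.isChain_turn).1
  have htile : ¬ Y.HasLeftTile (sInter 𝓕).sF d :=
    ((Complex.bStep_iff_of_turn_zero h1 h3 hdx).1 (List.isChain_cons_cons.1 hstep).1).2.2
  simp only [hasLeftTile_sInter_iff h1 h3 hne, not_forall] at htile
  obtain ⟨T, hT, htileT⟩ := htile
  have hET : Y.InSet T.sE (d :: x :: l) := fun y hy => sE_sInter_subset hT (hE y hy)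
  exact ⟨T, hT, hnil, hET,
    Complex.isChain_bStep_of_isChain_turn h1 h3 hl.isChain_turn hET (List.mem_cons_self ..) htileT⟩

theorem exists_isTight_of_bStep_sInter (h1 : Y.P1) (h3 : Y.P3) (hne : 𝓕.Nonempty)
    {p b : List Y.D} (hpb : Y.chainStep p b) (hstep : ∀ d ∈ p.getLast?, ∀ y ∈ b.head?,
      Y.bStep (sInter 𝓕).sE (sInter 𝓕).sF d y) :
    ∃ T ∈ 𝓕, Y.IsTight T.sE p := by
  obtain ⟨d, y, hd, hy, hturn⟩ := hpb
  have hpro := ((Complex.bStep_iff_of_turn_one h3 hturn).1 (hstep d hd y hy)).2.2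
  simp only [isProlongable_sInter_iff h1 hne, not_forall] at hpro
  obtain ⟨T, hT, hdT⟩ := hpro
  exact ⟨T, hT, fun d' hd' => Option.mem_unique hd hd' ▸ hdT⟩

theorem boundaryReduced_sInter (h1 : Y.P1) (h3 : Y.P3) (hne : 𝓕.Nonempty)
    (hsub : ∀ T ∈ 𝓕, T.IsSub) (hBR : ∀ T ∈ 𝓕, Y.BoundaryReduced T.sE T.sF) :
    Y.BoundaryReduced (sInter 𝓕).sE (sInter 𝓕).sF := by
  refine ⟨fun l hpath ⟨hl, hlen⟩ => ?_, fun bs hbs ⟨_, hE, hstep⟩ => ?_⟩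
  · have hg := hl.genus_pos
    obtain ⟨T, hT, hpathT⟩ := exists_bPath_of_bPath_sInter h1 h3 hne hpath hl (by omega)
    exact (hBR T hT).1 l hpathT ⟨hl, hlen⟩
  · obtain ⟨⟨-, hblock, hchain⟩, k, hlen⟩ := id hbs
    have hcount : k + 1 < bs.length := by simpa using (congrArg List.length hlen).ge
    obtain ⟨p, b, bs, rfl⟩ := exists_eq_cons_cons (by omega : 2 ≤ bs.length)
    have hjunction := ((List.isChain_flatten fun h => (hblock [] h).1 rfl).1 hstep).2
    obtain ⟨T, hT, hp⟩ := exists_isTight_of_bStep_sInter h1 h3 hne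
      (List.isChain_cons_cons.1 hchain).1 (List.isChain_cons_cons.1 hjunction).1
    exact (hBR T hT).not_isTight h1 h3 (hsub T hT) hbs
      (fun c hc d hd => sE_sInter_subset hT (hE d (List.mem_flatten_of_mem hc hd))) hp

theorem stronglyBoundaryReduced_sInter (h1 : Y.P1) (h3 : Y.P3) (hne : 𝓕.Nonempty)
    (hsub : ∀ T ∈ 𝓕, T.IsSub) (hBR : ∀ T ∈ 𝓕, Y.StronglyBoundaryReduced T.sE T.sF) :
    Y.StronglyBoundaryReduced (sInter 𝓕).sE (sInter 𝓕).sF := by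
  refine ⟨fun l hpath ⟨hl, hlen⟩ => ?_, fun bs hbs ⟨⟨_, hE, _⟩, d, y, hd, hy, hclose⟩ => ?_⟩
  · have hg := hl.genus_pos
    obtain ⟨T, hT, hpathT⟩ := exists_bPath_of_bPath_sInter h1 h3 hne hpath hl (by omega)
    exact (hBR T hT).1 l hpathT ⟨hl, hlen⟩
  · obtain ⟨⟨-, p, b, hp, hb, hpb⟩, -⟩ := id hbs
    obtain ⟨T, hT, hpT⟩ := exists_isTight_of_bStep_sInter h1 h3 hne hpb fun d' hd' y' hy' => by
      rwa [Option.mem_unique (getLast?_flatten_eq_some hp hd') hd,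
        Option.mem_unique (head?_flatten_eq_some hb hy') hy]
    exact (hBR T hT).not_isTight h1 h3 (hsub T hT) hbs
      (fun c hc d hd => sE_sInter_subset hT (hE d (List.mem_flatten_of_mem hc hd))) hp hpT

end SubC

/-! ### Tiled surfaces -/

namespace Hom

variable {g : ℕ} {Y Z : Complex g} (φ : Hom Y Z)

theorem dTail_mD (d : Y.D) : Z.dTail (φ.mD d) = φ.mV (Y.dTail d) := by
  obtain ⟨e, _ | _⟩ := d
  exacts [φ.hdst e, φ.hsrc e]

theorem dHead_mD (d : Y.D) : Z.dHead (φ.mD d) = φ.mV (Y.dHead d) := by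
  obtain ⟨e, _ | _⟩ := d
  exacts [φ.hsrc e, φ.hdst e]

theorem wordOf_map_mD (l : List Y.D) : Z.wordOf (l.map φ.mD) = Y.wordOf l := by
  simp [Complex.wordOf, Complex.dLet, mD, φ.hlab]

theorem exists_walkFrom_of_map_mD (hφ : Function.Injective φ.mV) {u : Y.V} {v : Z.V}
    {l : List Y.D} (h : Z.WalkFrom (φ.mV u) v (l.map φ.mD)) :
    ∃ w, φ.mV w = v ∧ Y.WalkFrom u w l := by
  induction l generalizing u with
  | nil =>
    exact ⟨u, Complex.walkFrom_nil_iff.1 h, .nil u⟩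
  | cons d l ih =>
    obtain ⟨htail, h⟩ := Complex.walkFrom_cons_iff.1 h
    obtain ⟨w, hw, hl⟩ := ih (φ.dHead_mD d ▸ h)
    exact ⟨w, hw, Complex.walkFrom_cons_iff.2 ⟨hφ ((φ.dTail_mD d).symm.trans htail), hl⟩⟩

theorem p1_of_inj (hφ : φ.Inj) (hZ : Z.P1) : Y.P1 := by
  refine ⟨fun e e' hend hlab => hφ.2.1 (hZ.1 _ _ ?_ ?_),
    fun e e' hend hlab => hφ.2.1 (hZ.2 _ _ ?_ ?_)⟩
  · rw [φ.hsrc, φ.hsrc, hend]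
  · rw [φ.hlab, φ.hlab, hlab]
  · rw [φ.hdst, φ.hdst, hend]
  · rw [φ.hlab, φ.hlab, hlab]

theorem p3_of_inj (hg : 0 < g) (hφ : φ.Inj) (hZ : Z.P3) : Y.P3 := by
  have hbdry (f : Y.F) : Z.bdry (φ.mF f) = (Y.bdry f).map φ.mD := φ.hbdry f
  refine ⟨fun f => ?_, fun f f' h => hφ.2.2 (hZ.2 (by rw [hbdry, hbdry, h]))⟩
  obtain ⟨⟨v, hwalk⟩, hword⟩ := hZ.1 (φ.mF f)
  rw [hbdry] at hwalk hword
  rw [wordOf_map_mD] at hword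
  refine ⟨?_, hword⟩
  obtain ⟨d, l, hdl⟩ : ∃ d l, Y.bdry f = d :: l := by
    refine List.exists_cons_of_length_pos ?_
    have hlen : (Y.bdry f).length = 4 * g := by
      simpa [Complex.wordOf, relatorWord] using congrArg List.length hword
    omega
  obtain rfl : φ.mV (Y.dTail d) = v := by
    rw [hdl] at hwalk
    exact (φ.dTail_mD d).symm.trans (Complex.walkFrom_cons_iff.1 hwalk).1
  obtain ⟨w, hw, hY⟩ := φ.exists_walkFrom_of_map_mD hφ.1 hwalk
  exact ⟨Y.dTail d, hφ.1 hw ▸ hY⟩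

end Hom

namespace Complex

variable {g : ℕ} {Y : Complex g}

theorem IsTiledSurface.p1 (h : Y.IsTiledSurface) : Y.P1 :=
  let ⟨_, hZ, φ, hφ⟩ := h
  φ.p1_of_inj hφ hZ.1

theorem IsTiledSurface.p3 (h : Y.IsTiledSurface) (hg : 0 < g) : Y.P3 :=
  let ⟨_, hZ, φ, hφ⟩ := h
  φ.p3_of_inj hg hφ hZ.2.1

end Complex

/-! ### Closures -/

theorem statement_3_general {g : ℕ} {Z : Complex g} (h1 : Z.P1) (h3 : Z.P3) (S : SubC Z) :
    (Z.BoundaryReduced Set.univ Set.univ →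
      S.le (BRcl Z S) ∧ Z.BoundaryReduced (BRcl Z S).sE (BRcl Z S).sF) ∧
    (Z.StronglyBoundaryReduced Set.univ Set.univ →
      S.le (SBRcl Z S) ∧
        Z.StronglyBoundaryReduced (SBRcl Z S).sE (SBRcl Z S).sF) :=
  ⟨fun hZ => ⟨SubC.le_sInter fun _ hT => hT.2.1,
      SubC.boundaryReduced_sInter h1 h3 ⟨fullSub Z, SubC.isSub_fullSub Z, S.le_fullSub, hZ⟩
        (fun _ hT => hT.1) fun _ hT => hT.2.2⟩,
    fun hZ => ⟨SubC.le_sInter fun _ hT => hT.2.1,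
      SubC.stronglyBoundaryReduced_sInter h1 h3 ⟨fullSub Z, SubC.isSub_fullSub Z, S.le_fullSub, hZ⟩
        (fun _ hT => hT.1) fun _ hT => hT.2.2⟩⟩

/-- Let `Y` (= `S`) be a tiled surface embedded in a boundary
reduced tiled surface `Z`. Then the BR-closure — the intersection of all
intermediate boundary reduced subcomplexes — contains `Y` and is boundary
reduced; likewise for the SBR-closure when `Z` is strongly boundary reduced. -/
theorem statement_3 (g : ℕ) (hg : 2 ≤ g) (Z : Complex g) (hZ : Z.IsTiledSurface)
    (S : SubC Z) (hS : S.IsSub) :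
    (Z.BoundaryReduced Set.univ Set.univ →
      S.le (BRcl Z S) ∧ Z.BoundaryReduced (BRcl Z S).sE (BRcl Z S).sF) ∧
    (Z.StronglyBoundaryReduced Set.univ Set.univ →
      S.le (SBRcl Z S) ∧
        Z.StronglyBoundaryReduced (SBRcl Z S).sE (SBRcl Z S).sF) :=
  statement_3_general hZ.p1 (hZ.p3 (by omega)) S

end CS

end
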